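/- arXiv:1802.03736 — 2 statements merged into one kernel-verified Lean document; each statement's English description precedes it below -/
import Mathlib

section
/- With the coordinate setup below, suppose F_{kij} = 0 identically on U and U is connected. Then F̄_{kij} = 0 identically on U if and only if α is a constant function. -/
open scoped BigOperators

/-- Points of ℝ³. -/
abbrev Pt := Fin 3 → ℝ

/-- Partial derivative `∂_i f` at `p`. -/
noncomputable def pd (i : Fin 3) (f : Pt → ℝ) (p : Pt) : ℝ :=
  fderiv ℝ f p (Pi.single i 1)

/-- The circulant structure `Q` with `Q¹₂ = Q²₃ = Q³₁ = 1`. -/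
def Qmat : Matrix (Fin 3) (Fin 3) ℝ := !![0,1,0; 0,0,1; 1,0,0]

/-- The metric `g_{ij}`: diagonal entries `A`, off-diagonal entries `B`. -/
def gm (A B : Pt → ℝ) (i j : Fin 3) (p : Pt) : ℝ :=
  if i = j then A p else B p

/-- The associated metric `g̃_{ij} = g_{is} Q^s_j + g_{sj} Q^s_i`. -/
def gt (A B : Pt → ℝ) (i j : Fin 3) (p : Pt) : ℝ :=
  ∑ s, (gm A B i s p * Qmat s j + gm A B s j p * Qmat s i)

/-- Christoffel symbols `Γ^k_{ij}` of a metric `h` with (pointwise) inverse `hinv`. -/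
noncomputable def Gamma (h hinv : Fin 3 → Fin 3 → Pt → ℝ) (k i j : Fin 3) (p : Pt) : ℝ :=
  (1/2) * ∑ s, hinv k s p * (pd i (h s j) p + pd j (h s i) p - pd s (h i j) p)

/-- Fundamental tensor `F_{kij} = ∂_k g̃_{ij} − Γ^s_{ki} g̃_{sj} − Γ^s_{kj} g̃_{si}`
of the metric `h` (with inverse `hinv`) acting on `ht` (= the associated metric). -/
noncomputable def Ften (h hinv ht : Fin 3 → Fin 3 → Pt → ℝ) (k i j : Fin 3) (p : Pt) : ℝ :=
  pd k (ht i j) p - (∑ s, Gamma h hinv s k i p * ht s j p)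
    - (∑ s, Gamma h hinv s k j p * ht s i p)

/-- Lee form `θ_k = g^{ij} F_{ijk}`. -/
noncomputable def theta (h hinv ht : Fin 3 → Fin 3 → Pt → ℝ) (k : Fin 3) (p : Pt) : ℝ :=
  ∑ i, ∑ j, hinv i j p * Ften h hinv ht i j k p

/-- Lee form `θ*_k = g^{ij} Q^s_j F_{isk}`. -/
noncomputable def thetaStar (h hinv ht : Fin 3 → Fin 3 → Pt → ℝ) (k : Fin 3) (p : Pt) : ℝ :=
  ∑ i, ∑ j, ∑ s, hinv i j p * Qmat s j * Ften h hinv ht i s k p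


lemma inv_explicit (A B : ℝ) (hB : 0 < B) (hAB : B < A) (N : Fin 3 → Fin 3 → ℝ)
    (h : ∀ i j : Fin 3, (∑ s, (if i = s then A else B) * N s j) = if i = j then (1:ℝ) else 0)
    (i j : Fin 3) : N i j = (if i = j then A + B else -B) / ((A - B) * (A + 2 * B)) := by
  have h1 : A - B ≠ 0 := by linarith
  have h2 : A + 2 * B ≠ 0 := by linarith
  have hsum : (A + 2 * B) * (N 0 j + N 1 j + N 2 j) = 1 := by
    have e0 := h 0 j
    have e1 := h 1 j
    have e2 := h 2 j
    fin_cases j <;> simp [Fin.sum_univ_three] at e0 e1 e2 ⊢ <;> linarith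
  have hi : (A - B) * N i j + B * (N 0 j + N 1 j + N 2 j) = if i = j then (1:ℝ) else 0 := by
    rw [← h i j]
    fin_cases i <;> simp [Fin.sum_univ_three] <;> ring
  rw [eq_div_iff (mul_ne_zero h1 h2)]
  have : N i j * ((A - B) * (A + 2 * B)) =
      (A + 2 * B) * ((A - B) * N i j + B * (N 0 j + N 1 j + N 2 j))
        - B * ((A + 2 * B) * (N 0 j + N 1 j + N 2 j)) := by ring
  rw [this, hi, hsum]
  split_ifs <;> ring

lemma gt_eq (A B : Pt → ℝ) (i j : Fin 3) (p : Pt) :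
    gt A B i j p = if i = j then 2 * B p else A p + B p := by
  fin_cases i <;> fin_cases j <;> simp [gt, gm, Qmat, Fin.sum_univ_three] <;> ring

lemma key (A B α : Pt → ℝ) (p : Pt) (hA : DifferentiableAt ℝ A p) (hB : DifferentiableAt ℝ B p)
    (hα : DifferentiableAt ℝ α p) (hBp : 0 < B p) (hAB : B p < A p) (hαp : 0 < α p)
    (ginv gbar gtbar ginvbar : Fin 3 → Fin 3 → Pt → ℝ)
    (hginv : ∀ i j, (∑ s, gm A B i s p * ginv s j p) = if i = j then (1:ℝ) else 0)
    (hgbar : ∀ i j p, gbar i j p = α p * gm A B i j p)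
    (hgtbar : ∀ i j p, gtbar i j p = α p * gt A B i j p)
    (hginvbar : ∀ i j, (∑ s, gbar i s p * ginvbar s j p) = if i = j then (1:ℝ) else 0)
    (k i j : Fin 3) :
    Ften gbar ginvbar gtbar k i j p = α p * Ften (gm A B) ginv (gt A B) k i j p
      - (1/2) * ((A p + 2 * B p) * (pd i α p + pd j α p)
        - (pd 0 α p + pd 1 α p + pd 2 α p) * (gm A B k i p + gm A B k j p)) := by
  have hN := inv_explicit (A p) (B p) hBp hAB (fun i j => ginv i j p) hginv
  have hα0 := hαp.ne'
  have hM : ∀ s t, ginvbar s t p = ginv s t p / α p := by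
    intro s t
    have := inv_explicit (A p) (B p) hBp hAB (fun i j => α p * ginvbar i j p) (by
      intro i j
      rw [← hginvbar i j]
      refine Finset.sum_congr rfl fun s _ => ?_
      rw [hgbar]; simp only [gm]; ring) s t
    rw [eq_div_iff hα0]
    have h2 := hN s t
    rw [h2, ← this]; ring
  have hdg : ∀ i j, DifferentiableAt ℝ (gm A B i j) p := by
    intro i j
    by_cases h : i = j
    · have : gm A B i j = A := by ext q; simp [gm, h]
      rw [this]; exact hA
    · have : gm A B i j = B := by ext q; simp [gm, h]
      rw [this]; exact hB
  have hdt : ∀ i j, DifferentiableAt ℝ (gt A B i j) p := by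
    intro i j
    unfold gt
    fun_prop
  have hpg : ∀ l i j, pd l (gbar i j) p = α p * pd l (gm A B i j) p + gm A B i j p * pd l α p := by
    intro l i j
    have : gbar i j = fun q => α q * gm A B i j q := funext (hgbar i j)
    simp [pd, this, fderiv_fun_mul hα (hdg i j)]
  have hpt : ∀ l i j, pd l (gtbar i j) p = α p * pd l (gt A B i j) p + gt A B i j p * pd l α p := by
    intro l i j
    have : gtbar i j = fun q => α q * gt A B i j q := funext (hgtbar i j)
    simp [pd, this, fderiv_fun_mul hα (hdt i j)]
  -- raised gradient
  let v : Fin 3 → ℝ := fun s => ∑ t, ginv s t p * pd t α p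
  have hleft : ∀ s i, ∑ t, ginv s t p * gm A B t i p = if s = i then (1:ℝ) else 0 := by
    have h1 : (Matrix.of fun i j => gm A B i j p) * (Matrix.of fun i j => ginv i j p) = 1 := by
      ext a b
      simp only [Matrix.mul_apply, Matrix.of_apply, Matrix.one_apply]
      exact hginv a b
    have h2 := mul_eq_one_comm.mp h1
    intro s i
    have h3 := congrFun (congrFun h2 s) i
    simpa only [Matrix.mul_apply, Matrix.of_apply, Matrix.one_apply] using h3
  have hGam : ∀ s k i, Gamma gbar ginvbar s k i p * α p = Gamma (gm A B) ginv s k i p * α p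
      + (1/2) * ((if s = i then (1:ℝ) else 0) * pd k α p + (if s = k then (1:ℝ) else 0) * pd i α p
        - gm A B k i p * v s) := by
    intro s k i
    rw [← hleft s i, ← hleft s k]
    simp only [Gamma, hpg, hM, v, Fin.sum_univ_three]
    field_simp
    ring
  have hv : ∀ j, ∑ s, v s * gt A B s j p = (pd 0 α p + pd 1 α p + pd 2 α p) - pd j α p := by
    intro j
    have h1 : A p - B p ≠ 0 := by linarith
    have h2 : A p + 2 * B p ≠ 0 := by linarith
    have h3 := mul_ne_zero h1 h2
    simp only [v, hN, gt_eq]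
    generalize hD : (A p - B p) * (A p + 2 * B p) = D at h3 ⊢
    fin_cases j <;> simp [Fin.sum_univ_three] <;> field_simp <;> rw [← hD] <;> ring
  have hsum : ∀ k i j, ∑ s, Gamma gbar ginvbar s k i p * gtbar s j p =
      α p * ∑ s, Gamma (gm A B) ginv s k i p * gt A B s j p
      + (1/2) * (gt A B i j p * pd k α p + gt A B k j p * pd i α p
        - gm A B k i p * ((pd 0 α p + pd 1 α p + pd 2 α p) - pd j α p)) := by
    intro k i j
    rw [← hv j]
    have hi : gt A B i j p = ∑ s, (if s = i then (1:ℝ) else 0) * gt A B s j p := by simp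
    have hk : gt A B k j p = ∑ s, (if s = k then (1:ℝ) else 0) * gt A B s j p := by simp
    rw [hi, hk]
    have : ∀ s, Gamma gbar ginvbar s k i p * gtbar s j p
        = (Gamma gbar ginvbar s k i p * α p) * gt A B s j p := by
      intro s; rw [hgtbar]; ring
    simp only [this, hGam, Fin.sum_univ_three]
    ring
  have hgg : ∀ a b, gt A B a b p = A p + 2 * B p - gm A B a b p := by
    intro a b
    rw [gt_eq]; simp only [gm]; split_ifs <;> ring
  have hsymm : gm A B j i p = gm A B i j p := by simp only [gm, eq_comm]
  simp only [Ften]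
  rw [hpt, hsum k i j, hsum k j i, hgg k i, hgg k j, hgg i j, hgg j i, hsymm]
  ring

/-- if `F = 0` on the connected open set `U`, then the conformally
transformed fundamental tensor `F̄` vanishes on `U` iff `α` is constant on `U`. -/
theorem conformal_F_vanishes_iff_constant
    (U : Set Pt) (hU : IsOpen U) (hUconn : IsConnected U) (A B : Pt → ℝ)
    (hA : ContDiffOn ℝ (⊤ : ℕ∞) A U) (hB : ContDiffOn ℝ (⊤ : ℕ∞) B U)
    (hpos : ∀ p ∈ U, 0 < B p ∧ B p < A p)
    (ginv : Fin 3 → Fin 3 → Pt → ℝ)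
    (hginv : ∀ p ∈ U, ∀ i j, (∑ s, gm A B i s p * ginv s j p) = if i = j then (1:ℝ) else 0)
    (hF : ∀ p ∈ U, ∀ k i j, Ften (gm A B) ginv (gt A B) k i j p = 0)
    (α : Pt → ℝ) (hα : ContDiffOn ℝ (⊤ : ℕ∞) α U) (hαpos : ∀ p ∈ U, 0 < α p)
    (gbar gtbar ginvbar : Fin 3 → Fin 3 → Pt → ℝ)
    (hgbar : ∀ i j p, gbar i j p = α p * gm A B i j p)
    (hgtbar : ∀ i j p, gtbar i j p = α p * gt A B i j p)
    (hginvbar : ∀ p ∈ U, ∀ i j, (∑ s, gbar i s p * ginvbar s j p) = if i = j then (1:ℝ) else 0) :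
    (∀ p ∈ U, ∀ k i j, Ften gbar ginvbar gtbar k i j p = 0) ↔
      (∃ c : ℝ, ∀ p ∈ U, α p = c) := by
  have hd : ∀ {f : Pt → ℝ}, ContDiffOn ℝ (⊤ : ℕ∞) f U → ∀ p ∈ U, DifferentiableAt ℝ f p := by
    intro f hf p hp
    exact (hf.differentiableOn (by simp)).differentiableAt (hU.mem_nhds hp)
  have hkey := fun p (hp : p ∈ U) => key A B α p (hd hA p hp) (hd hB p hp) (hd hα p hp)
    (hpos p hp).1 (hpos p hp).2 (hαpos p hp) ginv gbar gtbar ginvbar (hginv p hp) hgbar hgtbar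
    (hginvbar p hp)
  constructor
  · intro h
    refine hU.exists_is_const_of_fderiv_eq_zero hUconn.isPreconnected
      (fun p hp => (hd hα p hp).differentiableWithinAt) ?_
    intro p hp
    obtain ⟨hB0, hAB⟩ := hpos p hp
    have hE : ∀ k i, (A p + 2 * B p) * pd i α p
        = (pd 0 α p + pd 1 α p + pd 2 α p) * gm A B k i p := by
      intro k i
      have := hkey p hp k i i
      rw [h p hp, hF p hp] at this
      linarith
    have hS : pd 0 α p + pd 1 α p + pd 2 α p = 0 := by
      have e0 := hE 0 0
      have e1 := hE 1 0
      simp [gm] at e0 e1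
      have : (pd 0 α p + pd 1 α p + pd 2 α p) * (A p - B p) = 0 := by linarith
      exact (mul_eq_zero.mp this).resolve_right (by linarith)
    have hz : ∀ i, pd i α p = 0 := by
      intro i
      have := hE i i
      rw [hS, zero_mul] at this
      exact (mul_eq_zero.mp this).resolve_left (by linarith)
    ext x
    have hx : x = ∑ i, x i • (Pi.single i (1:ℝ) : Pt) := by
      ext l; fin_cases l <;> simp [Fin.sum_univ_three]
    rw [hx, map_sum]
    simp only [map_smul]
    simp only [pd] at hz
    simp [hz]
  · rintro ⟨c, hc⟩ p hp k i j
    have hz : ∀ l, pd l α p = 0 := by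
      intro l
      have : α =ᶠ[nhds p] fun _ => c := Filter.eventually_of_mem (hU.mem_nhds hp) hc
      simp [pd, this.fderiv_eq]
    rw [hkey p hp, hF p hp]
    simp [hz]
end

section
/- With the coordinate setup below, if the curvature of g vanishes identically on U (R^l_{ijk} = 0 for all indices), then the Ricci tensor of g̃ satisfies ρ̃_{ij} = (τ̃*/3)·g_{ij} + ((τ̃* + 2τ̃)/6)·g̃_{ij} at every point of U; in particular (U, g̃, Q) is almost Einstein, i.e. ρ̃ is a functional linear combination of g and g̃. -/
open scoped BigOperators

/-- Curvature `R^l_{ijk} = ∂_i Γ^l_{jk} − ∂_j Γ^l_{ik} + Γ^s_{jk}Γ^l_{is} − Γ^s_{ik}Γ^l_{js}`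
of the metric `h` with inverse `hinv`. -/
noncomputable def Riem (h hinv : Fin 3 → Fin 3 → Pt → ℝ) (l i j k : Fin 3) (p : Pt) : ℝ :=
  pd i (Gamma h hinv l j k) p - pd j (Gamma h hinv l i k) p
    + (∑ s, Gamma h hinv s j k p * Gamma h hinv l i s p)
    - (∑ s, Gamma h hinv s i k p * Gamma h hinv l j s p)

/-- Lowered curvature `R_{ijkl} = h_{ls} R^s_{ijk}`. -/
noncomputable def RiemLow (h hinv : Fin 3 → Fin 3 → Pt → ℝ) (i j k l : Fin 3) (p : Pt) : ℝ :=
  ∑ s, h l s p * Riem h hinv s i j k p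

/-- Ricci tensor `ρ_{jk} = h^{il} R_{ijkl}`. -/
noncomputable def Ricci (h hinv : Fin 3 → Fin 3 → Pt → ℝ) (j k : Fin 3) (p : Pt) : ℝ :=
  ∑ i, ∑ l, hinv i l p * RiemLow h hinv i j k l p

/-- Scalar curvature obtained by contracting the Ricci tensor of `(h, hinv)` with the
(inverse) metric `contr`: `contr^{jk} ρ_{jk}`. -/
noncomputable def scal (h hinv contr : Fin 3 → Fin 3 → Pt → ℝ) (p : Pt) : ℝ :=
  ∑ j, ∑ k, contr j k p * Ricci h hinv j k p


/-- first-kind Christoffel symbols -/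
noncomputable def G1 (h : Fin 3 → Fin 3 → Pt → ℝ) (l j k : Fin 3) (p : Pt) : ℝ :=
  (1/2) * (pd j (h l k) p + pd k (h l j) p - pd l (h j k) p)

lemma pd_congr {f g : Pt → ℝ} {p : Pt} (h : f =ᶠ[nhds p] g) (i : Fin 3) : pd i f p = pd i g p := by
  unfold pd; rw [h.fderiv_eq]

lemma pd_congr_ev {f g : Pt → ℝ} {p : Pt} (h : f =ᶠ[nhds p] g) (i : Fin 3) :
    pd i f =ᶠ[nhds p] pd i g := by
  filter_upwards [h.eventuallyEq_nhds] with q hq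
  exact pd_congr hq i

lemma pd_add {f g : Pt → ℝ} {p : Pt} (hf : DifferentiableAt ℝ f p) (hg : DifferentiableAt ℝ g p)
    (i : Fin 3) : pd i (fun q => f q + g q) p = pd i f p + pd i g p := by
  unfold pd; rw [fderiv_fun_add hf hg]; rfl

lemma pd_sub {f g : Pt → ℝ} {p : Pt} (hf : DifferentiableAt ℝ f p) (hg : DifferentiableAt ℝ g p)
    (i : Fin 3) : pd i (fun q => f q - g q) p = pd i f p - pd i g p := by
  unfold pd; rw [fderiv_fun_sub hf hg]; rfl

lemma pd_mul {f g : Pt → ℝ} {p : Pt} (hf : DifferentiableAt ℝ f p) (hg : DifferentiableAt ℝ g p)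
    (i : Fin 3) : pd i (fun q => f q * g q) p = f p * pd i g p + g p * pd i f p := by
  unfold pd; rw [fderiv_fun_mul hf hg]; simp

lemma pd_const_mul {f : Pt → ℝ} {p : Pt} (c : ℝ) (hf : DifferentiableAt ℝ f p)
    (i : Fin 3) : pd i (fun q => c * f q) p = c * pd i f p := by
  rw [pd_mul (differentiableAt_const c) hf]
  unfold pd; simp

lemma pd_sum {f : Fin 3 → Pt → ℝ} {p : Pt} (hf : ∀ s, DifferentiableAt ℝ (f s) p)
    (i : Fin 3) : pd i (fun q => ∑ s, f s q) p = ∑ s, pd i (f s) p := by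
  unfold pd; rw [fderiv_fun_sum (fun s _ => hf s)]; simp

lemma pd_diff {f : Pt → ℝ} {p : Pt} (hf : ContDiffAt ℝ 2 f p) (i : Fin 3) :
    DifferentiableAt ℝ (pd i f) p := by
  have : DifferentiableAt ℝ (fderiv ℝ f) p :=
    (hf.fderiv_right (m := 1) (by norm_num)).differentiableAt (by norm_num)
  unfold pd
  fun_prop

lemma pd_symm {f : Pt → ℝ} {p : Pt} (hf : ContDiffAt ℝ 2 f p) (i j : Fin 3) :
    pd i (pd j f) p = pd j (pd i f) p := by
  have hd : DifferentiableAt ℝ (fderiv ℝ f) p :=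
    (hf.fderiv_right (m := 1) (by norm_num)).differentiableAt (by norm_num)
  have hs : IsSymmSndFDerivAt ℝ f p := hf.isSymmSndFDerivAt (by simp)
  have key : ∀ i j, pd i (pd j f) p
      = fderiv ℝ (fderiv ℝ f) p (Pi.single i 1) (Pi.single j 1) := by
    intro i j
    have : pd j f = fun q => fderiv ℝ f q (Pi.single j 1) := rfl
    rw [this]; unfold pd
    rw [fderiv_clm_apply hd (differentiableAt_const _)]
    simp
  rw [key, key]; exact hs _ _

lemma lower_Gamma {h hinv : Fin 3 → Fin 3 → Pt → ℝ} {q : Pt}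
    (hq : ∀ i j, (∑ s, h i s q * hinv s j q) = if i = j then (1:ℝ) else 0) (l j k : Fin 3) :
    ∑ s, h l s q * Gamma h hinv s j k q = G1 h l j k q := by
  have h0 := hq l 0
  have h1 := hq l 1
  have h2 := hq l 2
  have e : G1 h l j k q = (if l = 0 then (1:ℝ) else 0) * G1 h 0 j k q
      + (if l = 1 then (1:ℝ) else 0) * G1 h 1 j k q
      + (if l = 2 then (1:ℝ) else 0) * G1 h 2 j k q := by fin_cases l <;> simp
  rw [e, ← h0, ← h1, ← h2]
  simp only [Gamma, G1, Fin.sum_univ_three]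
  ring

lemma riemLow_formula {h hinv : Fin 3 → Fin 3 → Pt → ℝ} {p : Pt}
    (hd : ∀ i j, DifferentiableAt ℝ (h i j) p)
    (hdd : ∀ k i j, DifferentiableAt ℝ (pd k (h i j)) p)
    (hid : ∀ i j, DifferentiableAt ℝ (hinv i j) p)
    (hsym : ∀ i j, h i j = h j i)
    (hinvq : ∀ᶠ q in nhds p, ∀ i j, (∑ s, h i s q * hinv s j q) = if i = j then (1:ℝ) else 0)
    (i j k l : Fin 3) :
    RiemLow h hinv i j k l p =
      (1/2) * (pd i (pd j (h l k)) p + pd i (pd k (h l j)) p - pd i (pd l (h j k)) p)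
      - (1/2) * (pd j (pd i (h l k)) p + pd j (pd k (h l i)) p - pd j (pd l (h i k)) p)
      - (∑ s, ∑ t, hinv s t p * G1 h s i l p * G1 h t j k p)
      + (∑ s, ∑ t, hinv s t p * G1 h s j l p * G1 h t i k p) := by
  have hG1 : ∀ a b c i, pd i (G1 h a b c) p =
      (1/2) * (pd i (pd b (h a c)) p + pd i (pd c (h a b)) p - pd i (pd a (h b c)) p) := by
    intro a b c i
    unfold G1
    rw [pd_const_mul _ (((hdd _ _ _).fun_add (hdd _ _ _)).fun_sub (hdd _ _ _)),
      pd_sub ((hdd _ _ _).fun_add (hdd _ _ _)) (hdd _ _ _), pd_add (hdd _ _ _) (hdd _ _ _)]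
  have hGd : ∀ a b c, DifferentiableAt ℝ (Gamma h hinv a b c) p := by
    intro a b c
    unfold Gamma
    fun_prop
  have hlow : ∀ i l j k, ∑ s, h l s p * pd i (Gamma h hinv s j k) p
      = pd i (G1 h l j k) p - ∑ s, Gamma h hinv s j k p * pd i (h l s) p := by
    intro i l j k
    have : (fun q => ∑ s, h l s q * Gamma h hinv s j k q) =ᶠ[nhds p] G1 h l j k := by
      filter_upwards [hinvq] with q hq
      exact lower_Gamma hq l j k
    rw [← pd_congr this, pd_sum (fun s => (hd l s).fun_mul (hGd s j k))]
    simp only [pd_mul (hd _ _) (hGd _ _ _), Finset.sum_add_distrib]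
    ring
  have hp := hinvq.self_of_nhds
  have hlg := fun l j k => lower_Gamma hp l j k
  have hGG : ∀ s j k, Gamma h hinv s j k p = ∑ t, hinv s t p * G1 h t j k p := by
    intro s j k
    simp only [Gamma, G1, Fin.sum_univ_three]; ring
  have hdh : ∀ i l s, pd i (h l s) p = G1 h l i s p + G1 h s i l p := by
    intro i l s
    simp only [G1, hsym s l, hsym s i, hsym l i]; ring
  have e1 : RiemLow h hinv i j k l p =
      (∑ s, h l s p * pd i (Gamma h hinv s j k) p) - (∑ s, h l s p * pd j (Gamma h hinv s i k) p)
      + (∑ t, Gamma h hinv t j k p * ∑ s, h l s p * Gamma h hinv s i t p)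
      - (∑ t, Gamma h hinv t i k p * ∑ s, h l s p * Gamma h hinv s j t p) := by
    simp only [RiemLow, Riem, Fin.sum_univ_three]; ring
  rw [e1, hlow, hlow]
  simp only [hlg, hdh, hG1]
  simp only [hGG, Fin.sum_univ_three]
  ring

lemma inv_formula {d o : ℝ} (h1 : d - o ≠ 0) (h2 : d + 2 * o ≠ 0) (x : Fin 3 → Fin 3 → ℝ)
    (hx : ∀ i j, (∑ s, (if i = s then d else o) * x s j) = if i = j then (1:ℝ) else 0)
    (i j : Fin 3) :
    x i j = if i = j then (d + o) * ((d - o) * (d + 2 * o))⁻¹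
      else - o * ((d - o) * (d + 2 * o))⁻¹ := by
  have hD : (d - o) * (d + 2 * o) ≠ 0 := mul_ne_zero h1 h2
  have e0 := hx 0 j
  have e1 := hx 1 j
  have e2 := hx 2 j
  simp only [Fin.sum_univ_three] at e0 e1 e2
  fin_cases i <;> fin_cases j <;> simp [-mul_inv_rev, -neg_mul] at e0 e1 e2 ⊢ <;>
  rw [← div_eq_mul_inv, eq_div_iff hD] <;>
  first
  | linear_combination (d + o) * e0 - o * e1 - o * e2
  | linear_combination (d + o) * e1 - o * e0 - o * e2
  | linear_combination (d + o) * e2 - o * e1 - o * e0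

/-- the 2-jet expression of the lowered curvature -/
noncomputable def RJ (w d o : ℝ) (a b : Fin 3 → ℝ) (aa bb : Fin 3 → Fin 3 → ℝ)
    (i j k l : Fin 3) : ℝ :=
  let D2 := fun x y m n : Fin 3 => if m = n then aa x y else bb x y
  let D1 := fun x m n : Fin 3 => if m = n then a x else b x
  let G := fun m x y : Fin 3 => (1/2) * (D1 x m y + D1 y m x - D1 m x y)
  let hi := fun m n : Fin 3 => if m = n then (d + o) * w else - o * w
  (1/2) * (D2 i j l k + D2 i k l j - D2 i l j k)
      - (1/2) * (D2 j i l k + D2 j k l i - D2 j l i k)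
      - (∑ s, ∑ t, hi s t * G s i l * G t j k)
      + (∑ s, ∑ t, hi s t * G s j l * G t i k)

lemma pd_gm (D O : Pt → ℝ) (k i j : Fin 3) :
    pd k (gm D O i j) = if i = j then pd k D else pd k O := by
  unfold gm; split_ifs <;> rfl

lemma pd_ite (D O : Pt → ℝ) (k : Fin 3) (c : Prop) [Decidable c] (p : Pt) :
    pd k (if c then D else O) p = if c then pd k D p else pd k O p := by
  split_ifs <;> rfl

lemma riemLow_gm {U : Set Pt} (hU : IsOpen U) {D O : Pt → ℝ}
    (hD : ∀ p ∈ U, ContDiffAt ℝ 2 D p) (hO : ∀ p ∈ U, ContDiffAt ℝ 2 O p)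
    (h1 : ∀ p ∈ U, D p - O p ≠ 0) (h2 : ∀ p ∈ U, D p + 2 * O p ≠ 0)
    {hinv : Fin 3 → Fin 3 → Pt → ℝ}
    (hh : ∀ p ∈ U, ∀ i j, (∑ s, gm D O i s p * hinv s j p) = if i = j then (1:ℝ) else 0)
    {p : Pt} (hp : p ∈ U) (i j k l : Fin 3) :
    RiemLow (gm D O) hinv i j k l p =
      RJ ((D p - O p) * (D p + 2 * O p))⁻¹ (D p) (O p) (fun x => pd x D p) (fun x => pd x O p)
        (fun x y => pd x (pd y D) p) (fun x y => pd x (pd y O) p) i j k l := by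
  have hUp : ∀ᶠ q in nhds p, q ∈ U := hU.mem_nhds hp
  have hf : ∀ q ∈ U, ∀ i j, hinv i j q = if i = j then
      (D q + O q) * ((D q - O q) * (D q + 2 * O q))⁻¹
      else - O q * ((D q - O q) * (D q + 2 * O q))⁻¹ := by
    intro q hq i j
    exact inv_formula (h1 q hq) (h2 q hq) (fun i j => hinv i j q) (fun i j => hh q hq i j) i j
  have dD : DifferentiableAt ℝ D p := (hD p hp).differentiableAt (by norm_num)
  have dO : DifferentiableAt ℝ O p := (hO p hp).differentiableAt (by norm_num)
  have hne := mul_ne_zero (h1 p hp) (h2 p hp)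
  rw [riemLow_formula (h := gm D O)]
  · simp only [pd_gm, RJ, G1, hf p hp, pd_ite, ite_apply]
  · intro i j; unfold gm; split_ifs <;> assumption
  · intro k i j; rw [pd_gm]; split_ifs
    · exact pd_diff (hD p hp) k
    · exact pd_diff (hO p hp) k
  · intro i j
    have : hinv i j =ᶠ[nhds p] fun q => if i = j then
      (D q + O q) * ((D q - O q) * (D q + 2 * O q))⁻¹
      else - O q * ((D q - O q) * (D q + 2 * O q))⁻¹ := by
      filter_upwards [hUp] with q hq using hf q hq i j
    refine DifferentiableAt.congr_of_eventuallyEq ?_ this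
    split_ifs <;> fun_prop (disch := assumption)
  · intro i j; unfold gm; simp only [eq_comm]
  · filter_upwards [hUp] with q hq using hh q hq

lemma gt_eq_s13 (A B : Pt → ℝ) : gt A B = gm (fun p => 2 * B p) (fun p => A p + B p) := by
  funext i j p
  simp only [gt, gm, Qmat, Fin.sum_univ_three]
  fin_cases i <;> fin_cases j <;> simp <;> ring

/-- the 2-jet expression of the Ricci tensor of the associated metric -/
noncomputable def RicJ (w A B : ℝ) (a b : Fin 3 → ℝ) (aa bb : Fin 3 → Fin 3 → ℝ)
    (j k : Fin 3) : ℝ :=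
  ∑ i, ∑ l, (if i = l then (2 * B + (A + B)) * (-w/2) else -(A + B) * (-w/2)) *
    RJ (-w/2) (2 * B) (A + B) (fun x => 2 * b x) (fun x => a x + b x)
      (fun x y => 2 * bb x y) (fun x y => aa x y + bb x y) i j k l

set_option maxHeartbeats 4000000 in
lemma alg (w A B : ℝ) (a b : Fin 3 → ℝ) (aa bb : Fin 3 → Fin 3 → ℝ)
    (ha : ∀ i j, aa i j = aa j i) (hb : ∀ i j, bb i j = bb j i)
    (hf : ∀ i j k l, RJ w A B a b aa bb i j k l = 0) (j k : Fin 3) :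
    RicJ w A B a b aa bb j k =
      if j = k then RicJ w A B a b aa bb 0 0 else RicJ w A B a b aa bb 0 1 := by
  have f0 := hf 0 1 0 1
  have f1 := hf 0 1 0 2
  have f2 := hf 0 1 1 2
  have f3 := hf 0 2 0 2
  have f4 := hf 0 2 1 2
  have f5 := hf 1 2 1 2
  have a1 := ha 1 0
  have a2 := ha 2 0
  have a3 := ha 2 1
  have b1 := hb 1 0
  have b2 := hb 2 0
  have b3 := hb 2 1
  simp [RJ, Fin.sum_univ_three, a1, a2, a3, b1, b2, b3] at f0 f1 f2 f3 f4 f5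
  have t00 : RicJ w A B a b aa bb 1 1 = RicJ w A B a b aa bb 0 0 := by
    simp [RicJ, RJ, Fin.sum_univ_three, a1, a2, a3, b1, b2, b3]
    linear_combination - w * (2*B*f1+2*B*f2-(A+B)*f3+(A+B)*f5)
  have t22 : RicJ w A B a b aa bb 2 2 = RicJ w A B a b aa bb 0 0 := by
    simp [RicJ, RJ, Fin.sum_univ_three, a1, a2, a3, b1, b2, b3]
    linear_combination - w * (-(A+B)*f0+2*B*f1-2*B*f4+(A+B)*f5)
  have t02 : RicJ w A B a b aa bb 0 2 = RicJ w A B a b aa bb 0 1 := by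
    simp [RicJ, RJ, Fin.sum_univ_three, a1, a2, a3, b1, b2, b3]
    linear_combination - w * (-B*f0-A*f2+B*f3-A*f4)
  have t12 : RicJ w A B a b aa bb 1 2 = RicJ w A B a b aa bb 0 1 := by
    simp [RicJ, RJ, Fin.sum_univ_three, a1, a2, a3, b1, b2, b3]
    linear_combination - w * (-B*f0+A*f1-A*f4+B*f5)
  have s10 : RicJ w A B a b aa bb 1 0 = RicJ w A B a b aa bb 0 1 := by
    simp [RicJ, RJ, Fin.sum_univ_three, a1, a2, a3, b1, b2, b3]
    ring
  have s20 : RicJ w A B a b aa bb 2 0 = RicJ w A B a b aa bb 0 2 := by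
    simp [RicJ, RJ, Fin.sum_univ_three, a1, a2, a3, b1, b2, b3]
    ring
  have s21 : RicJ w A B a b aa bb 2 1 = RicJ w A B a b aa bb 1 2 := by
    simp [RicJ, RJ, Fin.sum_univ_three, a1, a2, a3, b1, b2, b3]
    ring
  rw [t02] at s20
  rw [t12] at s21
  fin_cases j <;> fin_cases k <;> simp [t00, t22, t02, t12, s10, s20, s21]

/-- if the curvature of `g` vanishes on `U`, then
`ρ̃_{ij} = (τ̃*/3) g_{ij} + ((τ̃* + 2τ̃)/6) g̃_{ij}`; in particular `(U, g̃, Q)` is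
almost Einstein: `ρ̃` is a functional linear combination of `g` and `g̃`. -/
theorem almost_einstein_of_flat_g
    (U : Set Pt) (hU : IsOpen U) (A B : Pt → ℝ)
    (hA : ContDiffOn ℝ (⊤ : ℕ∞) A U) (hB : ContDiffOn ℝ (⊤ : ℕ∞) B U)
    (hpos : ∀ p ∈ U, 0 < B p ∧ B p < A p)
    (ginv gtinv : Fin 3 → Fin 3 → Pt → ℝ)
    (hginv : ∀ p ∈ U, ∀ i j, (∑ s, gm A B i s p * ginv s j p) = if i = j then (1:ℝ) else 0)
    (hgtinv : ∀ p ∈ U, ∀ i j, (∑ s, gt A B i s p * gtinv s j p) = if i = j then (1:ℝ) else 0)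
    (hflat : ∀ p ∈ U, ∀ l i j k, Riem (gm A B) ginv l i j k p = 0) :
    (∀ p ∈ U, ∀ i j,
      Ricci (gt A B) gtinv i j p =
        (scal (gt A B) gtinv ginv p / 3) * gm A B i j p
        + ((scal (gt A B) gtinv ginv p + 2 * scal (gt A B) gtinv gtinv p) / 6) * gt A B i j p)
    ∧ ∃ β γ : Pt → ℝ, ∀ p ∈ U, ∀ i j,
        Ricci (gt A B) gtinv i j p = β p * gm A B i j p + γ p * gt A B i j p := by
  have key : ∀ p ∈ U, ∀ i j,
      Ricci (gt A B) gtinv i j p =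
        (scal (gt A B) gtinv ginv p / 3) * gm A B i j p
        + ((scal (gt A B) gtinv ginv p + 2 * scal (gt A B) gtinv gtinv p) / 6) * gt A B i j p := by
    intro p hp i j
    have cA : ∀ q ∈ U, ContDiffAt ℝ 2 A q := fun q hq =>
      ((hA q hq).contDiffAt (hU.mem_nhds hq)).of_le (WithTop.coe_le_coe.2 (le_top : (2:ℕ∞) ≤ ⊤))
    have cB : ∀ q ∈ U, ContDiffAt ℝ 2 B q := fun q hq =>
      ((hB q hq).contDiffAt (hU.mem_nhds hq)).of_le (WithTop.coe_le_coe.2 (le_top : (2:ℕ∞) ≤ ⊤))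
    have hUp : ∀ᶠ q in nhds p, q ∈ U := hU.mem_nhds hp
    have dA : ∀ q ∈ U, DifferentiableAt ℝ A q := fun q hq =>
      (cA q hq).differentiableAt (by norm_num)
    have dB : ∀ q ∈ U, DifferentiableAt ℝ B q := fun q hq =>
      (cB q hq).differentiableAt (by norm_num)
    have n1 : ∀ q ∈ U, A q - B q ≠ 0 := fun q hq => by
      have := hpos q hq; exact ne_of_gt (by linarith)
    have n2 : ∀ q ∈ U, A q + 2 * B q ≠ 0 := fun q hq => by
      have := hpos q hq; exact ne_of_gt (by linarith)
    have m1 : ∀ q ∈ U, 2 * B q - (A q + B q) ≠ 0 := fun q hq => by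
      have := hpos q hq; exact ne_of_lt (by linarith)
    have m2 : ∀ q ∈ U, 2 * B q + 2 * (A q + B q) ≠ 0 := fun q hq => by
      have := hpos q hq; exact ne_of_gt (by linarith)
    have hgt' := hgtinv
    rw [gt_eq_s13] at hgt'
    set w : ℝ := ((A p - B p) * (A p + 2 * B p))⁻¹ with hw
    have hw1 : w * ((A p - B p) * (A p + 2 * B p)) = 1 :=
      inv_mul_cancel₀ (mul_ne_zero (n1 p hp) (n2 p hp))
    have hw' : ((2 * B p - (A p + B p)) * (2 * B p + 2 * (A p + B p)))⁻¹ = -w/2 := by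
      apply inv_eq_of_mul_eq_one_right
      linear_combination hw1
    have hflat' : ∀ i j k l, RJ w (A p) (B p) (fun x => pd x A p) (fun x => pd x B p)
        (fun x y => pd x (pd y A) p) (fun x y => pd x (pd y B) p) i j k l = 0 := by
      intro i j k l
      rw [hw, ← riemLow_gm hU cA cB n1 n2 hginv hp]
      simp [RiemLow, hflat p hp]
    have e1 : ∀ x, pd x (fun q => 2 * B q) p = 2 * pd x B p := fun x =>
      pd_const_mul 2 (dB p hp) x
    have e2 : ∀ x, pd x (fun q => A q + B q) p = pd x A p + pd x B p := fun x =>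
      pd_add (dA p hp) (dB p hp) x
    have e3 : ∀ x y, pd x (pd y (fun q => 2 * B q)) p = 2 * pd x (pd y B) p := by
      intro x y
      rw [← pd_const_mul 2 (pd_diff (cB p hp) y) x]
      apply pd_congr
      filter_upwards [hUp] with q hq using pd_const_mul 2 (dB q hq) y
    have e4 : ∀ x y, pd x (pd y (fun q => A q + B q)) p
        = pd x (pd y A) p + pd x (pd y B) p := by
      intro x y
      rw [← pd_add (pd_diff (cA p hp) y) (pd_diff (cB p hp) y) x]
      apply pd_congr
      filter_upwards [hUp] with q hq using pd_add (dA q hq) (dB q hq) y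
    have hgi : ∀ i j, ginv i j p = if i = j then (A p + B p) * w else - B p * w := fun i j =>
      inv_formula (n1 p hp) (n2 p hp) (fun i j => ginv i j p) (fun i j => hginv p hp i j) i j
    have hgti : ∀ i j, gtinv i j p = if i = j then (2 * B p + (A p + B p)) * (-w/2)
        else -(A p + B p) * (-w/2) := fun i j => by
      rw [← hw']
      exact inv_formula (m1 p hp) (m2 p hp) (fun i j => gtinv i j p)
        (fun i j => hgt' p hp i j) i j
    have hRic : ∀ j k, Ricci (gt A B) gtinv j k p =
        RicJ w (A p) (B p) (fun x => pd x A p) (fun x => pd x B p)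
        (fun x y => pd x (pd y A) p) (fun x y => pd x (pd y B) p) j k := by
      intro j k
      unfold Ricci RicJ
      refine Finset.sum_congr rfl fun i _ => Finset.sum_congr rfl fun l _ => ?_
      rw [hgti, gt_eq_s13, riemLow_gm hU (fun q hq => contDiffAt_const.mul (cB q hq))
        (fun q hq => (cA q hq).add (cB q hq)) m1 m2 hgt' hp, hw']
      simp only [e1, e2, e3, e4]
    have hal := alg w (A p) (B p) _ _ _ _ (fun x y => pd_symm (cA p hp) x y)
      (fun x y => pd_symm (cB p hp) x y) hflat'
    simp only [← hRic] at hal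
    generalize Ricci (gt A B) gtinv 0 0 p = X at hal
    generalize Ricci (gt A B) gtinv 0 1 p = Y at hal
    have hs1 : scal (gt A B) gtinv ginv p = 3 * (A p + B p) * w * X - 6 * B p * w * Y := by
      simp [scal, hal, hgi, Fin.sum_univ_three]; ring
    have hs2 : scal (gt A B) gtinv gtinv p
        = 3 * (A p + 3 * B p) * (-w/2) * X + 3 * (A p + B p) * w * Y := by
      simp [scal, hal, hgti, Fin.sum_univ_three]; ring
    rw [hs1, hs2, hal, gt_eq_s13]
    unfold gm
    split_ifs
    · linear_combination (-X) * hw1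
    · linear_combination (-Y) * hw1
  exact ⟨key, _, _, key⟩
end
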